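/- Let N ≥ 1, n ≥ 1 be integers, let A ∈ ℂ^{N×N} be Hermitian positive definite with eigendecomposition A = U_A D_A U_A^H where U_A is unitary and D_A is real diagonal with 0 < (D_A)_{1,1} ≤ … ≤ (D_A)_{N,N}, and let B ∈ ℂ^{n×n} be Hermitian positive semidefinite with eigendecomposition B = U_B D_B U_B^H where U_B is unitary and D_B is real diagonal with (D_B)_{1,1} ≥ … ≥ (D_B)_{n,n} ≥ 0. Assume N ≥ rank(B) and set m = min(n, N). Let D_P ∈ ℂ^{n×N} be the rectangular diagonal matrix with (D_P)_{i,i} = √((D_A)_{i,i}(D_B)_{i,i}) for i = 1,…,m and all other entries zero, and set P_opt = U_B D_P U_A^H. Then P_opt is feasible, i.e. P_opt A^{-1} P_opt^H ⪰ B, it satisfies tr(P_opt P_opt^H) = Σ_{i=1}^m (D_A)_{i,i}(D_B)_{i,i}, and every P ∈ ℂ^{n×N} with P A^{-1} P^H ⪰ B satisfies tr(P P^H) ≥ tr(P_opt P_opt^H). (Theorem 1, optimality part.) -/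

import Mathlib

open Matrix Finset
open scoped ComplexOrder

/-! In the eigenbases the constraint reads `Q * (diagonal a)⁻¹ * Qᴴ ⪰ diagonal b`, with `a`
increasing and `b` decreasing. For each `k`, the first `k` columns of `Q` contribute a matrix of
rank at most `k`, so on its kernel, whose dimension is at least `n - k`, the remaining columns alone
dominate `diagonal b`. Taking traces against the projection onto that kernel bounds the tail
`∑ j ≥ k, (a j)⁻¹ * ‖Q j‖²`, where `Q j` is the `j`-th column, below by the sum of the smallest
`n - k` entries `∑ i ≥ k, b i`. Abel summation against the increasing weights `a` turns these tail
bounds into `tr (Q Qᴴ) = ∑ j, ‖Q j‖² ≥ ∑ j, a j * b j`, which `D_P` attains. -/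

section Sums

variable {R : Type*} [CommRing R] [LinearOrder R] [IsStrictOrderedRing R]

theorem sum_mul_le_sum_mul_of_sum_Ici_le {N : ℕ} {a x y : Fin N → R} (ha : ∀ i, 0 ≤ a i)
    (ham : Monotone a) (hxy : ∀ k, ∑ j ∈ Ici k, x j ≤ ∑ j ∈ Ici k, y j) :
    ∑ j, a j * x j ≤ ∑ j, a j * y j := by
  induction N with
  | zero => simp
  | succ N ih =>
    have tail := ih (a := fun j => a j.succ - a 0) (x := fun j => x j.succ) (y := fun j => y j.succ)
      (fun i => sub_nonneg.2 (ham (Fin.zero_le _)))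
      (fun i j hij => sub_le_sub_right (ham (Fin.succ_le_succ_iff.2 hij)) _)
      (fun k => by simpa only [Fin.sum_Ici_succ] using hxy k.succ)
    have total : ∑ j, x j ≤ ∑ j, y j := by simpa [← bot_eq_zero] using hxy 0
    simp only [sub_mul, sum_sub_distrib, ← mul_sum] at tail
    rw [Fin.sum_univ_succ, Fin.sum_univ_succ] at total ⊢
    linarith [mul_le_mul_of_nonneg_left total (ha 0)]

theorem sum_le_sum_mul_of_card_le_sum {ι : Type*} [Fintype ι] {s : Finset ι} {b w : ι → R} {β : R}
    (hβ : 0 ≤ β) (hs : ∀ i ∈ s, b i ≤ β) (hsc : ∀ i ∉ s, β ≤ b i)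
    (hw0 : ∀ i, 0 ≤ w i) (hw1 : ∀ i, w i ≤ 1) (hw : (#s : R) ≤ ∑ i, w i) :
    ∑ i ∈ s, b i ≤ ∑ i, b i * w i := by
  classical
  have excess : ∑ i ∈ s, (b i - β) ≤ ∑ i, (b i - β) * w i := by
    rw [← Fintype.sum_ite_mem]
    refine sum_le_sum fun i _ => ?_
    split_ifs with hi
    · exact le_mul_of_le_one_right (sub_nonpos.2 (hs i hi)) (hw1 i)
    · exact mul_nonneg (sub_nonneg.2 (hsc i hi)) (hw0 i)
  simp only [sub_mul, sum_sub_distrib, ← mul_sum, sum_const, nsmul_eq_mul] at excess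
  linarith [mul_le_mul_of_nonneg_left hw hβ]

theorem card_filter_le_val (n k : ℕ) : #{i : Fin n | k ≤ i.val} = n - k := by
  have h := card_filter_add_card_filter_not (s := univ) fun i : Fin n => i.val < k
  simp only [Fin.card_filter_val_lt, not_lt, card_univ, Fintype.card_fin] at h
  omega

theorem sum_filter_le_sum_mul_of_antitone {n k : ℕ} {b w : Fin n → R} (hb : ∀ i, 0 ≤ b i)
    (hbm : Antitone b) (hw0 : ∀ i, 0 ≤ w i) (hw1 : ∀ i, w i ≤ 1)
    (hw : ((n - k : ℕ) : R) ≤ ∑ i, w i) :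
    ∑ i : Fin n with k ≤ i.val, b i ≤ ∑ i, b i * w i := by
  rw [← card_filter_le_val] at hw
  by_cases hk : k < n
  · refine sum_le_sum_mul_of_card_le_sum (hb ⟨k, hk⟩) (fun i hi => hbm ?_) (fun i hi => hbm ?_)
      hw0 hw1 hw
    · exact (mem_filter_univ i).1 hi
    · exact le_of_not_ge fun h => hi ((mem_filter_univ i).2 h)
  · refine sum_le_sum_mul_of_card_le_sum le_rfl (fun i hi => ?_) (fun i _ => hb i) hw0 hw1 hw
    exact absurd (((mem_filter_univ i).1 hi).trans_lt i.2) hk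

end Sums

theorem sum_ite_eq_val {M : Type*} [AddCommMonoid M] (N i : ℕ) (x : M) :
    ∑ j : Fin N, (if i = j then x else 0) = if i < N then x else 0 := by
  rw [Fin.sum_univ_eq_sum_range (fun j => if i = j then x else 0), sum_ite_eq]
  simp only [mem_range]

theorem sum_sum_ite_val_eq {M : Type*} [AddCommMonoid M] {n N : ℕ} (f : Fin n → Fin N → M) :
    ∑ i : Fin n, ∑ j : Fin N, (if (i : ℕ) = j then f i j else 0) =
      ∑ i : Fin (min n N), f (i.castLE (min_le_left n N)) (i.castLE (min_le_right n N)) := by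
  rw [← Fintype.sum_prod_type'
    (f := fun (i : Fin n) (j : Fin N) => if (i : ℕ) = j then f i j else 0)]
  symm
  refine Fintype.sum_of_injective
    (fun i : Fin (min n N) => (i.castLE (min_le_left n N), i.castLE (min_le_right n N)))
    (fun i j hij => by simpa using hij) _ _ (fun p hp => if_neg fun h => hp ?_)
    (fun i => (if_pos rfl).symm)
  exact ⟨⟨p.1, lt_min p.1.2 (h ▸ p.2.2)⟩, Prod.ext rfl (Fin.ext h)⟩

theorem sum_Ici_sum_ite_val_eq_le {M : Type*} [AddCommMonoid M] [PartialOrder M]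
    [IsOrderedAddMonoid M] {n N : ℕ} {b : Fin n → M} (hb : ∀ i, 0 ≤ b i) (k : Fin N) :
    ∑ j ∈ Ici k, ∑ i : Fin n, (if (i : ℕ) = j then b i else 0) ≤
      ∑ i : Fin n with k.val ≤ i.val, b i := by
  rw [sum_comm, sum_filter]
  refine sum_le_sum fun i _ => ?_
  split_ifs with hki
  · calc ∑ j ∈ Ici k, (if (i : ℕ) = j then b i else 0)
        ≤ ∑ j : Fin N, if (i : ℕ) = j then b i else 0 :=
          sum_le_sum_of_subset_of_nonneg (subset_univ _) fun j _ _ => ite_nonneg (hb i) le_rfl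
      _ = if (i : ℕ) < N then b i else 0 := sum_ite_eq_val N i (b i)
      _ ≤ b i := by split_ifs <;> simp [hb i]
  · refine (sum_eq_zero fun j hj => if_neg fun h => hki ?_).le
    exact h ▸ Fin.le_def.1 (mem_Ici.1 hj)

section Matrices

variable {𝕜 : Type*} [RCLike 𝕜] {m ι : Type*} [Fintype m] [Fintype ι]

open scoped MatrixOrder in
theorem posSemidef_of_isStarProjection {E : Matrix ι ι 𝕜} (hE : IsStarProjection E) :
    E.PosSemidef :=
  hE.nonneg.posSemidef

open scoped MatrixOrder in
theorem trace_mul_nonneg_of_posSemidef {A B : Matrix ι ι 𝕜} (hA : A.PosSemidef)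
    (hB : B.PosSemidef) : 0 ≤ (A * B).trace := by
  classical
  obtain ⟨C, rfl⟩ := CStarAlgebra.nonneg_iff_eq_star_mul_self.mp hB.nonneg
  rw [← Matrix.mul_assoc, trace_mul_comm, ← Matrix.mul_assoc]
  exact (hA.mul_mul_conjTranspose_same C).trace_nonneg

theorem exists_isStarProjection_mul_eq_zero {G : Matrix ι ι 𝕜} (hG : G.IsHermitian) :
    ∃ E : Matrix ι ι 𝕜, IsStarProjection E ∧ G * E = 0 ∧
      E.trace = ((Fintype.card ι - G.rank : ℕ) : 𝕜) := by
  classical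
  let φ := Unitary.conjStarAlgAut 𝕜 (Matrix ι ι 𝕜) hG.eigenvectorUnitary
  let e : Matrix ι ι 𝕜 := diagonal fun i => if hG.eigenvalues i = 0 then 1 else 0
  have he : IsStarProjection e := by
    constructor
    · simp [e, IsIdempotentElem, diagonal_mul_diagonal]
    · simp [e, IsSelfAdjoint, star_eq_conjTranspose, diagonal_conjTranspose, Pi.star_def, apply_ite]
  refine ⟨φ e, he.map φ, ?_, ?_⟩
  · have hdiag : diagonal (RCLike.ofReal ∘ hG.eigenvalues) * e = 0 := by
      rw [diagonal_mul_diagonal, diagonal_eq_zero]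
      ext i
      simp +contextual
    conv_lhs => rw [hG.spectral_theorem]
    rw [← map_mul, hdiag, map_zero]
  · have htrace : (φ e).trace = e.trace := by
      rw [Unitary.conjStarAlgAut_apply, trace_mul_comm, ← Matrix.mul_assoc,
        Unitary.coe_star_mul_self, Matrix.one_mul]
    have hcard := Finset.card_filter_add_card_filter_not (s := univ) (hG.eigenvalues · = 0)
    rw [htrace, hG.rank_eq_card_non_zero_eigs, Fintype.card_subtype, ← card_univ, ← hcard,
      Nat.add_sub_cancel_right, trace_diagonal, sum_boole]

theorem re_diag_mem_Icc_of_isStarProjection {E : Matrix ι ι 𝕜} (hE : IsStarProjection E) (i : ι) :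
    RCLike.re (E i i) ∈ Set.Icc 0 1 := by
  classical
  have h0 := RCLike.nonneg_iff.1 ((posSemidef_of_isStarProjection hE).diag_nonneg (i := i))
  have h1 := RCLike.nonneg_iff.1 ((posSemidef_of_isStarProjection hE.one_sub).diag_nonneg (i := i))
  exact ⟨h0.1, by simpa using h1.1⟩

theorem sum_filter_le_re_trace_of_rank_le {n k : ℕ} {b : Fin n → ℝ} (hb : ∀ i, 0 ≤ b i)
    (hbm : Antitone b) {G H : Matrix (Fin n) (Fin n) 𝕜} (hG : G.IsHermitian) (hGk : G.rank ≤ k)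
    (hH : H.PosSemidef) (hGH : (G + H - diagonal fun i => (b i : 𝕜)).PosSemidef) :
    ∑ i : Fin n with k ≤ i.val, b i ≤ RCLike.re H.trace := by
  obtain ⟨E, hE, hGE, hEtr⟩ := exists_isStarProjection_mul_eq_zero hG
  have hE01 := re_diag_mem_Icc_of_isStarProjection hE
  have hmass : ((n - k : ℕ) : ℝ) ≤ ∑ i, RCLike.re (E i i) := by
    have h : ∑ i, RCLike.re (E i i) = ((n - G.rank : ℕ) : ℝ) := by
      simpa [trace] using congrArg RCLike.re hEtr
    rw [h]
    exact_mod_cast Nat.sub_le_sub_left hGk n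
  have hbE : ∑ i, b i * RCLike.re (E i i) ≤ RCLike.re (H * E).trace := by
    have h := RCLike.nonneg_iff.1
      (trace_mul_nonneg_of_posSemidef hGH (posSemidef_of_isStarProjection hE)) |>.1
    rw [Matrix.sub_mul, Matrix.add_mul, hGE, zero_add, trace_sub, map_sub, sub_nonneg] at h
    simpa [trace, diagonal_mul] using h
  have hHE : RCLike.re (H * E).trace ≤ RCLike.re H.trace := by
    have h := RCLike.nonneg_iff.1
      (trace_mul_nonneg_of_posSemidef hH (posSemidef_of_isStarProjection hE.one_sub)) |>.1
    rwa [Matrix.mul_sub, Matrix.mul_one, trace_sub, map_sub, sub_nonneg] at h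
  exact (sum_filter_le_sum_mul_of_antitone hb hbm (fun i => (hE01 i).1) (fun i => (hE01 i).2)
    hmass).trans (hbE.trans hHE)

variable [DecidableEq ι]

theorem re_trace_mul_diagonal_mul_conjTranspose (Q : Matrix m ι 𝕜) (w : ι → ℝ) :
    RCLike.re (Q * diagonal (fun j => (w j : 𝕜)) * Qᴴ).trace = ∑ j, w j * ∑ i, ‖Q i j‖ ^ 2 := by
  have hdiag : ∀ i, RCLike.re ((Q * diagonal (fun j => (w j : 𝕜)) * Qᴴ) i i) =
      ∑ j, w j * ‖Q i j‖ ^ 2 := fun i => by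
    rw [mul_apply, map_sum]
    refine sum_congr rfl fun j _ => ?_
    rw [mul_diagonal, conjTranspose_apply, mul_right_comm, RCLike.star_def, RCLike.mul_conj,
      mul_comm]
    norm_cast
  simp only [trace, diag_apply, map_sum, hdiag, mul_sum]
  exact sum_comm

theorem posSemidef_mul_diagonal_mul_conjTranspose {p : Type*} [Finite p] (Q : Matrix p ι 𝕜)
    {w : ι → ℝ} (hw : ∀ j, 0 ≤ w j) : (Q * diagonal (fun j => (w j : 𝕜)) * Qᴴ).PosSemidef :=
  (PosSemidef.diagonal fun j => by simpa using hw j).mul_mul_conjTranspose_same Q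

theorem rank_mul_diagonal_mul_le_card {R p q : Type*} [Field R] [DecidableEq R] [Fintype q]
    (P : Matrix p ι R) (v : ι → R) (Q : Matrix ι q R) :
    (P * diagonal v * Q).rank ≤ #{j | v j ≠ 0} := by
  refine (rank_mul_le_left _ _).trans ((rank_mul_le_right _ _).trans ?_)
  rw [rank_diagonal, Fintype.card_subtype]

theorem sum_filter_le_sum_Ici_mul_sum_norm_sq {n N : ℕ} {b : Fin n → ℝ} (hb : ∀ i, 0 ≤ b i)
    (hbm : Antitone b) {w : Fin N → ℝ} (hw : ∀ j, 0 ≤ w j) {Q : Matrix (Fin n) (Fin N) 𝕜}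
    (hQ : (Q * diagonal (fun j => (w j : 𝕜)) * Qᴴ - diagonal fun i => (b i : 𝕜)).PosSemidef)
    (k : Fin N) :
    ∑ i : Fin n with k.val ≤ i.val, b i ≤ ∑ j ∈ Ici k, w j * ∑ i, ‖Q i j‖ ^ 2 := by
  let u : Fin N → ℝ := fun j => if j < k then w j else 0
  let v : Fin N → ℝ := fun j => if k ≤ j then w j else 0
  have hu : ∀ j, 0 ≤ u j := fun j => ite_nonneg (hw j) le_rfl
  have hv : ∀ j, 0 ≤ v j := fun j => ite_nonneg (hw j) le_rfl
  have hsplit : Q * diagonal (fun j => (w j : 𝕜)) * Qᴴ =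
      Q * diagonal (fun j => (u j : 𝕜)) * Qᴴ + Q * diagonal (fun j => (v j : 𝕜)) * Qᴴ := by
    rw [← Matrix.add_mul, ← Matrix.mul_add, diagonal_add]
    congr! with j
    rcases lt_or_ge j k with h | h
    · simp [u, v, h, h.not_ge]
    · simp [u, v, h, h.not_gt]
  have hrank : (Q * diagonal (fun j => (u j : 𝕜)) * Qᴴ).rank ≤ k :=
    calc (Q * diagonal (fun j => (u j : 𝕜)) * Qᴴ).rank
        ≤ #{j | (u j : 𝕜) ≠ 0} := rank_mul_diagonal_mul_le_card _ _ _
      _ ≤ #(Iio k) := card_le_card fun j hj => by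
          have huj : u j ≠ 0 := RCLike.ofReal_ne_zero.1 ((mem_filter_univ j).1 hj)
          exact mem_Iio.2 (by_contra fun h => huj (if_neg h))
      _ = k := Fin.card_Iio k
  rw [hsplit] at hQ
  refine (sum_filter_le_re_trace_of_rank_le hb hbm
    (posSemidef_mul_diagonal_mul_conjTranspose Q hu).isHermitian hrank
    (posSemidef_mul_diagonal_mul_conjTranspose Q hv) hQ).trans_eq ?_
  rw [re_trace_mul_diagonal_mul_conjTranspose, ← filter_le_eq_Ici, sum_filter]
  simp only [v, ite_mul, zero_mul]

theorem inv_diagonal_ofReal {a : ι → ℝ} (ha : ∀ j, 0 < a j) :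
    (diagonal fun j => (a j : 𝕜))⁻¹ = diagonal fun j => (((a j)⁻¹ : ℝ) : 𝕜) := by
  refine inv_eq_right_inv ?_
  rw [diagonal_mul_diagonal, ← diagonal_one]
  congr! with j
  rw [← RCLike.ofReal_mul, mul_inv_cancel₀ (ha j).ne', RCLike.ofReal_one]

theorem sum_sum_ite_le_re_trace_mul_conjTranspose {n N : ℕ} {a : Fin N → ℝ} (ha : ∀ j, 0 < a j)
    (ham : Monotone a) {b : Fin n → ℝ} (hb : ∀ i, 0 ≤ b i) (hbm : Antitone b)
    {Q : Matrix (Fin n) (Fin N) 𝕜}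
    (hQ : (Q * (diagonal fun j => (a j : 𝕜))⁻¹ * Qᴴ - diagonal fun i => (b i : 𝕜)).PosSemidef) :
    ∑ i : Fin n, ∑ j : Fin N, (if (i : ℕ) = j then a j * b i else 0) ≤
      RCLike.re (Q * Qᴴ).trace := by
  have hinv : ∀ j, 0 ≤ (a j)⁻¹ := fun j => inv_nonneg.2 (ha j).le
  rw [inv_diagonal_ofReal ha] at hQ
  calc ∑ i : Fin n, ∑ j : Fin N, (if (i : ℕ) = j then a j * b i else 0)
      = ∑ j, a j * ∑ i : Fin n, if (i : ℕ) = j then b i else 0 := by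
        simp only [mul_sum, mul_ite, mul_zero]
        exact sum_comm
    _ ≤ ∑ j, a j * ((a j)⁻¹ * ∑ i, ‖Q i j‖ ^ 2) :=
        sum_mul_le_sum_mul_of_sum_Ici_le (fun j => (ha j).le) ham fun k =>
          (sum_Ici_sum_ite_val_eq_le hb k).trans
            (sum_filter_le_sum_Ici_mul_sum_norm_sq hb hbm hinv hQ k)
    _ = ∑ j, 1 * ∑ i, ‖Q i j‖ ^ 2 :=
        sum_congr rfl fun j _ => by rw [mul_inv_cancel_left₀ (ha j).ne', one_mul]
    _ = RCLike.re (Q * Qᴴ).trace := by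
        rw [← re_trace_mul_diagonal_mul_conjTranspose]
        simp only [RCLike.ofReal_one, diagonal_one, Matrix.mul_one]

theorem eq_zero_of_rank_diagonal_le {n r : ℕ} {b : Fin n → ℝ} (hb : ∀ i, 0 ≤ b i) (hbm : Antitone b)
    (hr : (diagonal fun i => (b i : 𝕜)).rank ≤ r) {i : Fin n} (hi : r ≤ i) : b i = 0 := by
  by_contra hne
  have hsub : Iic i ⊆ ({l | (b l : 𝕜) ≠ 0} : Finset (Fin n)) := fun l hl => by
    have : 0 < b l := ((hb i).lt_of_ne' hne).trans_le (hbm (mem_Iic.1 hl))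
    simpa using this.ne'
  have hcard := card_le_card hsub
  rw [rank_diagonal, Fintype.card_subtype] at hr
  rw [Fin.card_Iic] at hcard
  omega

end Matrices

section UnitaryConj

variable {R : Type*} [CommRing R] [StarRing R] {m ι : Type*} [Fintype m] [Fintype ι]
  [DecidableEq ι]

theorem rank_unitary_conj {U : Matrix ι ι R} (hU : U ∈ unitaryGroup ι R) (M : Matrix ι ι R) :
    (U * M * Uᴴ).rank = M.rank := by
  have hdet := (isUnit_iff_isUnit_det U).1 (Unitary.isUnit_coe (U := ⟨U, hU⟩))
  have hdetH : IsUnit Uᴴ.det := by simpa [det_conjTranspose] using hdet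
  rw [rank_mul_eq_left_of_isUnit_det _ _ hdetH, rank_mul_eq_right_of_isUnit_det _ _ hdet]

theorem inv_unitary_conj {U : Matrix ι ι R} (hU : U ∈ unitaryGroup ι R) (M : Matrix ι ι R) :
    (U * M * Uᴴ)⁻¹ = U * M⁻¹ * Uᴴ := by
  have hUU : Uᴴ * U = 1 := mem_unitaryGroup_iff'.1 hU
  rw [Matrix.mul_inv_rev, Matrix.mul_inv_rev, inv_eq_left_inv hUU, inv_eq_right_inv hUU,
    Matrix.mul_assoc]

theorem trace_unitary_mul_mul_conjTranspose [DecidableEq m] {U : Matrix m m R}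
    (hU : U ∈ unitaryGroup m R) {V : Matrix ι ι R} (hV : V ∈ unitaryGroup ι R) (Q : Matrix m ι R) :
    ((U * Q * Vᴴ) * (U * Q * Vᴴ)ᴴ).trace = (Q * Qᴴ).trace := by
  have hUU : Uᴴ * U = 1 := mem_unitaryGroup_iff'.1 hU
  have hVV : Vᴴ * V = 1 := mem_unitaryGroup_iff'.1 hV
  calc ((U * Q * Vᴴ) * (U * Q * Vᴴ)ᴴ).trace = (U * (Q * (Vᴴ * V) * Qᴴ * Uᴴ)).trace := by
        simp only [conjTranspose_mul, conjTranspose_conjTranspose, Matrix.mul_assoc]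
    _ = (Q * Qᴴ).trace := by
        rw [hVV, trace_mul_comm, Matrix.mul_one, Matrix.mul_assoc, hUU, Matrix.mul_one]

theorem exists_eq_unitary_mul_mul_conjTranspose [DecidableEq m] {U : Matrix m m R}
    (hU : U ∈ unitaryGroup m R) {V : Matrix ι ι R} (hV : V ∈ unitaryGroup ι R) (P : Matrix m ι R) :
    ∃ Q : Matrix m ι R, P = U * Q * Vᴴ := by
  have hUU : U * Uᴴ = 1 := mem_unitaryGroup_iff.1 hU
  have hVV : V * Vᴴ = 1 := mem_unitaryGroup_iff.1 hV
  refine ⟨Uᴴ * P * V, ?_⟩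
  calc P = (U * Uᴴ) * P * (V * Vᴴ) := by rw [hUU, hVV, Matrix.one_mul, Matrix.mul_one]
    _ = U * (Uᴴ * P * V) * Vᴴ := by simp only [Matrix.mul_assoc]

theorem posSemidef_unitary_conj_sub_iff [PartialOrder R] [DecidableEq m] {U : Matrix m m R}
    (hU : U ∈ unitaryGroup m R) {V : Matrix ι ι R} (hV : V ∈ unitaryGroup ι R) (Q : Matrix m ι R)
    (S : Matrix ι ι R) (T : Matrix m m R) :
    ((U * Q * Vᴴ) * (V * S * Vᴴ)⁻¹ * (U * Q * Vᴴ)ᴴ - U * T * Uᴴ).PosSemidef ↔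
      (Q * S⁻¹ * Qᴴ - T).PosSemidef := by
  have hVV : Vᴴ * V = 1 := mem_unitaryGroup_iff'.1 hV
  have hconj : (U * Q * Vᴴ) * (V * S * Vᴴ)⁻¹ * (U * Q * Vᴴ)ᴴ - U * T * Uᴴ =
      U * (Q * S⁻¹ * Qᴴ - T) * Uᴴ :=
    calc _ = U * (Q * (Vᴴ * V) * S⁻¹ * (Vᴴ * V) * Qᴴ) * Uᴴ - U * T * Uᴴ := by
          rw [inv_unitary_conj hV]
          simp only [conjTranspose_mul, conjTranspose_conjTranspose, Matrix.mul_assoc]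
      _ = _ := by
          rw [hVV, Matrix.mul_one, Matrix.mul_one, Matrix.mul_sub, Matrix.sub_mul]
  rw [hconj]
  exact (Unitary.isUnit_coe (U := ⟨U, hU⟩)).posSemidef_star_right_conjugate_iff

end UnitaryConj

/-- The `n × N` rectangular diagonal matrix with diagonal entries `d i i`. The entries are indexed
by both `Fin n` and `Fin N` so that `D_P` is `rectDiagonal fun i j => √(DA j * DB i)`. -/
def rectDiagonal {R : Type*} [Zero R] {n N : ℕ} (d : Fin n → Fin N → R) :
    Matrix (Fin n) (Fin N) R :=
  of fun i j => if (i : ℕ) = j then d i j else 0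

theorem rectDiagonal_mul_diagonal_mul_conjTranspose {R : Type*} [NonUnitalSemiring R] [StarRing R]
    {n N : ℕ} (d : Fin n → Fin N → R) (w : Fin N → R) :
    rectDiagonal d * diagonal w * (rectDiagonal d)ᴴ =
      diagonal fun i : Fin n => ∑ j : Fin N,
        if (i : ℕ) = j then d i j * w j * star (d i j) else 0 := by
  ext i l
  rw [mul_apply, diagonal_apply]
  split_ifs with hil
  · refine sum_congr rfl fun j _ => ?_
    rw [mul_diagonal, conjTranspose_apply, ← hil, rectDiagonal, of_apply]
    split_ifs <;> simp
  · refine sum_eq_zero fun j _ => ?_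
    rw [mul_diagonal, conjTranspose_apply, rectDiagonal, of_apply, of_apply]
    split_ifs with hi hl
    · exact absurd (Fin.ext (hi.trans hl.symm)) hil
    all_goals simp

section SqrtProduct

variable (𝕜 : Type*) [RCLike 𝕜] {n N : ℕ} {a : Fin N → ℝ} {b : Fin n → ℝ}

theorem rectDiagonal_sqrt_mul_diagonal_mul_conjTranspose (ha : ∀ j, 0 ≤ a j) (hb : ∀ i, 0 ≤ b i)
    (w : Fin N → ℝ) :
    rectDiagonal (fun i j => (√(a j * b i) : 𝕜)) * diagonal (fun j => (w j : 𝕜)) *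
        (rectDiagonal fun i j => (√(a j * b i) : 𝕜))ᴴ =
      diagonal fun i : Fin n =>
        ((∑ j : Fin N, if (i : ℕ) = j then a j * b i * w j else 0 : ℝ) : 𝕜) := by
  have hentry : ∀ i j, (√(a j * b i) : 𝕜) * w j * star (√(a j * b i) : 𝕜) =
      ((a j * b i * w j : ℝ) : 𝕜) := fun i j => by
    rw [RCLike.star_def, RCLike.conj_ofReal, mul_right_comm]
    norm_cast
    rw [Real.mul_self_sqrt (mul_nonneg (ha j) (hb i))]
  rw [rectDiagonal_mul_diagonal_mul_conjTranspose]
  simp only [hentry, RCLike.ofReal_sum, apply_ite (RCLike.ofReal (K := 𝕜)), RCLike.ofReal_zero]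

theorem rectDiagonal_sqrt_mul_inv_mul_conjTranspose (ha : ∀ j, 0 < a j) (hb : ∀ i, 0 ≤ b i)
    (hbN : ∀ i : Fin n, N ≤ i → b i = 0) :
    rectDiagonal (fun i j => (√(a j * b i) : 𝕜)) * (diagonal fun j => (a j : 𝕜))⁻¹ *
        (rectDiagonal fun i j => (√(a j * b i) : 𝕜))ᴴ =
      diagonal fun i => (b i : 𝕜) := by
  have hsum : ∀ i : Fin n, ∑ j : Fin N, (if (i : ℕ) = j then a j * b i * (a j)⁻¹ else 0) = b i :=
    fun i => by
      simp only [mul_right_comm _ (b i), mul_inv_cancel₀ (ha _).ne', one_mul, sum_ite_eq_val]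
      exact ite_eq_left_iff.2 fun h => (hbN i (not_lt.1 h)).symm
  rw [inv_diagonal_ofReal ha,
    rectDiagonal_sqrt_mul_diagonal_mul_conjTranspose 𝕜 (fun j => (ha j).le) hb]
  simp only [hsum]

theorem trace_rectDiagonal_sqrt_mul_conjTranspose (ha : ∀ j, 0 ≤ a j) (hb : ∀ i, 0 ≤ b i) :
    (rectDiagonal (fun i j => (√(a j * b i) : 𝕜)) *
        (rectDiagonal fun i j => (√(a j * b i) : 𝕜))ᴴ).trace =
      ((∑ i : Fin n, ∑ j : Fin N, if (i : ℕ) = j then a j * b i else 0 : ℝ) : 𝕜) := by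
  have h := rectDiagonal_sqrt_mul_diagonal_mul_conjTranspose 𝕜 ha hb 1
  simp only [Pi.one_apply, RCLike.ofReal_one, diagonal_one, Matrix.mul_one, mul_one] at h
  rw [h, trace_diagonal, RCLike.ofReal_sum]

end SqrtProduct

theorem stmt0_general {𝕜 : Type*} [RCLike 𝕜] {N n : ℕ}
    {A : Matrix (Fin N) (Fin N) 𝕜} {UA : Matrix (Fin N) (Fin N) 𝕜}
    (hUA : UA ∈ unitaryGroup (Fin N) 𝕜)
    {DA : Fin N → ℝ} (hDApos : ∀ i, 0 < DA i) (hDAmono : Monotone DA)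
    (hAdec : A = UA * diagonal (fun i => (DA i : 𝕜)) * UAᴴ)
    {Bm : Matrix (Fin n) (Fin n) 𝕜} {UB : Matrix (Fin n) (Fin n) 𝕜}
    (hUB : UB ∈ unitaryGroup (Fin n) 𝕜)
    {DB : Fin n → ℝ} (hDBnonneg : ∀ i, 0 ≤ DB i) (hDBanti : Antitone DB)
    (hBdec : Bm = UB * diagonal (fun i => (DB i : 𝕜)) * UBᴴ)
    (hrank : Bm.rank ≤ N)
    {Popt : Matrix (Fin n) (Fin N) 𝕜}
    (hPopt : Popt = UB * rectDiagonal (fun i j => (√(DA j * DB i) : 𝕜)) * UAᴴ) :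
    (Popt * A⁻¹ * Poptᴴ - Bm).PosSemidef ∧
    (Popt * Poptᴴ).trace =
      ((∑ i : Fin (min n N),
        DA (Fin.castLE (min_le_right n N) i) * DB (Fin.castLE (min_le_left n N) i) : ℝ) : 𝕜) ∧
    ∀ P : Matrix (Fin n) (Fin N) 𝕜, (P * A⁻¹ * Pᴴ - Bm).PosSemidef →
      RCLike.re (Popt * Poptᴴ).trace ≤ RCLike.re (P * Pᴴ).trace := by
  subst hAdec hBdec hPopt
  have hDA : ∀ i, 0 ≤ DA i := fun i => (hDApos i).le
  have htrace := (trace_unitary_mul_mul_conjTranspose hUB hUA _).trans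
    (trace_rectDiagonal_sqrt_mul_conjTranspose 𝕜 hDA hDBnonneg)
  refine ⟨?_, ?_, fun P hP => ?_⟩
  · have hDBzero : ∀ i : Fin n, N ≤ i → DB i = 0 := fun i =>
      eq_zero_of_rank_diagonal_le hDBnonneg hDBanti ((rank_unitary_conj hUB _).ge.trans hrank)
    rw [posSemidef_unitary_conj_sub_iff hUB hUA,
      rectDiagonal_sqrt_mul_inv_mul_conjTranspose 𝕜 hDApos hDBnonneg hDBzero, sub_self]
    exact PosSemidef.zero
  · rw [htrace, sum_sum_ite_val_eq fun i j => DA j * DB i]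
  · obtain ⟨Q, rfl⟩ := exists_eq_unitary_mul_mul_conjTranspose hUB hUA P
    rw [posSemidef_unitary_conj_sub_iff hUB hUA] at hP
    rw [htrace, RCLike.ofReal_re, trace_unitary_mul_mul_conjTranspose hUB hUA]
    exact sum_sum_ite_le_re_trace_mul_conjTranspose hDApos hDAmono hDBnonneg hDBanti hP

/-- Theorem 1 (optimality part): the matrix `P_opt = U_B D_P U_Aᴴ` is feasible for the
constraint `P A⁻¹ Pᴴ ⪰ B`, has energy `tr(P_opt P_optᴴ) = Σ_{i<m} (D_A)_{ii} (D_B)_{ii}`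
with `m = min n N`, and minimizes the energy among all feasible matrices. -/
theorem stmt0 (N n : ℕ) (hN : 1 ≤ N) (hn : 1 ≤ n)
    (A : Matrix (Fin N) (Fin N) ℂ) (hA : A.PosDef)
    (UA : Matrix (Fin N) (Fin N) ℂ) (hUA : UA ∈ Matrix.unitaryGroup (Fin N) ℂ)
    (DA : Fin N → ℝ) (hDApos : ∀ i, 0 < DA i) (hDAmono : Monotone DA)
    (hAdec : A = UA * Matrix.diagonal (fun i => (DA i : ℂ)) * UAᴴ)
    (Bm : Matrix (Fin n) (Fin n) ℂ) (hB : Bm.PosSemidef)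
    (UB : Matrix (Fin n) (Fin n) ℂ) (hUB : UB ∈ Matrix.unitaryGroup (Fin n) ℂ)
    (DB : Fin n → ℝ) (hDBnonneg : ∀ i, 0 ≤ DB i) (hDBanti : Antitone DB)
    (hBdec : Bm = UB * Matrix.diagonal (fun i => (DB i : ℂ)) * UBᴴ)
    (hrank : Bm.rank ≤ N)
    (DP : Matrix (Fin n) (Fin N) ℂ)
    (hDP : ∀ (i : Fin n) (j : Fin N),
      DP i j = if (i : ℕ) = (j : ℕ) then (Real.sqrt (DA j * DB i) : ℂ) else 0)
    (Popt : Matrix (Fin n) (Fin N) ℂ) (hPopt : Popt = UB * DP * UAᴴ) :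
    (Popt * A⁻¹ * Poptᴴ - Bm).PosSemidef ∧
    (Popt * Poptᴴ).trace =
      ((∑ i : Fin (min n N),
        DA (Fin.castLE (min_le_right n N) i) * DB (Fin.castLE (min_le_left n N) i) : ℝ) : ℂ) ∧
    ∀ P : Matrix (Fin n) (Fin N) ℂ, (P * A⁻¹ * Pᴴ - Bm).PosSemidef →
      ((Popt * Poptᴴ).trace).re ≤ ((P * Pᴴ).trace).re := by
  obtain rfl : DP = rectDiagonal fun i j => (√(DA j * DB i) : ℂ) := by
    ext i j
    exact hDP i j
  exact stmt0_general hUA hDApos hDAmono hAdec hUB hDBnonneg hDBanti hBdec hrank hPopt
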